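/- Fix q > 0, a ∈ ℝ³ ∖ {0} and ι ∈ {+1, −1}. Let x : I → ℝ³ be a C¹ curve with x(t) ≠ 0 and ρ(x(t),a) > 1 for all t ∈ I, solving x′(t) = ∇_x S_ι(x(t),a). Then the associated angle Θ(t) := ∇_a S_ι(x(t),a) evolves linearly: Θ′(t) = a for all t ∈ I. -/

import Mathlib

/-!
Jacobi's theorem on generating functions: the mixed second derivatives `D_x ∇_a S` and `D_a ∇_x S`
are adjoint to each other, so along `x' = ∇_x S(x, a)` one has
`Θ' = (D_x ∇_a S) ∇_x S = (D_a ∇_x S)† ∇_x S = ∇_a (|∇_x S|² / 2)`.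
For the `S_ι` at hand, `K'(s) = √(1 - 1/s)` and `ι² = 1` give the Hamilton–Jacobi equation
`|∇_x S_ι(x, a)|² = |a|² - q / |x|`, whose right-hand side has half-gradient `a` in `a`.
-/

open scoped RealInnerProductSpace

noncomputable section

/-- Euclidean three-space. -/
abbrev R3 : Type := EuclideanSpace ℝ (Fin 3)

/-- `ρ(x,a) = (|a|/(2q))(|x||a| + x·a)`. -/
def rhoF (q : ℝ) (x a : R3) : ℝ := ‖a‖ / (2 * q) * (‖x‖ * ‖a‖ + ⟪x, a⟫)

/-- `K(s) = √(s(s−1)) − ln(√s + √(s−1))`. -/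
def KF (s : ℝ) : ℝ := Real.sqrt (s * (s - 1)) - Real.log (Real.sqrt s + Real.sqrt (s - 1))

/-- The generating function `S_ι(x,a) = ι·(q/|a|)·K(ρ(x,a)) − (|x||a| − x·a)/2`. -/
def Sgen (q ι : ℝ) (x a : R3) : ℝ :=
  ι * (q / ‖a‖) * KF (rhoF q x a) - (‖x‖ * ‖a‖ - ⟪x, a⟫) / 2

open ContinuousLinearMap InnerProductSpace Function
open scoped Gradient Topology InnerProduct

section Jacobi

variable {E F G : Type*}
  [NormedAddCommGroup E] [InnerProductSpace ℝ E] [CompleteSpace E]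
  [NormedAddCommGroup F] [InnerProductSpace ℝ F] [CompleteSpace F]
  [NormedAddCommGroup G] [NormedSpace ℝ G]

lemma exists_hasFDerivAt_gradient {φ : G → E → ℝ} {Φ : G → StrongDual ℝ E}
    {Φ' : G →L[ℝ] StrongDual ℝ E} {y : G} {c : E}
    (hφ : ∀ᶠ z in 𝓝 y, HasFDerivAt (φ z) (Φ z) c) (hΦ : HasFDerivAt Φ Φ' y) :
    ∃ M : G →L[ℝ] E, (∀ u v, ⟪M u, v⟫ = Φ' u v) ∧ HasFDerivAt (fun z ↦ ∇ (φ z) c) M y := by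
  -- `toDual` is conjugate-linear, which over `ℝ` is linear only up to unfolding `starRingEnd ℝ`
  let riesz : StrongDual ℝ E ≃L[ℝ] E := (toDual ℝ E).symm.toContinuousLinearEquiv
  refine ⟨riesz ∘L Φ', fun u v ↦ toDual_symm_apply, ?_⟩
  have hgrad : (fun z ↦ ∇ (φ z) c) =ᶠ[𝓝 y] fun z ↦ riesz (Φ z) :=
    hφ.mono fun z hz ↦ hz.hasGradientAt.gradient
  exact (riesz.hasFDerivAt.comp y hΦ).congr_of_eventuallyEq hgrad

theorem exists_hasFDerivAt_gradient_adjoint {S : E → F → ℝ} {x : E} {a : F}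
    (hS : ContDiffAt ℝ 2 (uncurry S) (x, a)) :
    ∃ M : E →L[ℝ] F, HasFDerivAt (fun y ↦ ∇ (S y) a) M x ∧
      HasFDerivAt (fun b ↦ ∇ (fun y ↦ S y b) x) (M†) a := by
  have hdiff : ∀ᶠ p in 𝓝 (x, a), HasFDerivAt (uncurry S) (fderiv ℝ (uncurry S) p) p :=
    (hS.eventually (by simp)).mono fun p hp ↦ (hp.differentiableAt two_ne_zero).hasFDerivAt
  let D := fderiv ℝ (fderiv ℝ (uncurry S)) (x, a)
  have hDderiv : HasFDerivAt (fderiv ℝ (uncurry S)) D (x, a) :=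
    ((hS.fderiv_right (m := 1) one_add_one_eq_two.le).differentiableAt one_ne_zero).hasFDerivAt
  have hinl : HasFDerivAt (fun y : E ↦ (y, a)) (inl ℝ E F) x := hasFDerivAt_prodMk_left x a
  have hinr : HasFDerivAt (fun b : F ↦ (x, b)) (inr ℝ E F) a := hasFDerivAt_prodMk_right x a
  have hpartial_a : ∀ᶠ y in 𝓝 x,
      HasFDerivAt (S y) (fderiv ℝ (uncurry S) (y, a) ∘L inr ℝ E F) a :=
    (hinl.continuousAt.eventually hdiff).mono fun y hy ↦
      HasFDerivAt.comp (g := uncurry S) a hy (hasFDerivAt_prodMk_right y a)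
  have hpartial_x : ∀ᶠ b in 𝓝 a,
      HasFDerivAt (fun y ↦ S y b) (fderiv ℝ (uncurry S) (x, b) ∘L inl ℝ E F) x :=
    (hinr.continuousAt.eventually hdiff).mono fun b hb ↦
      HasFDerivAt.comp (g := uncurry S) (f := fun y : E ↦ (y, b)) x hb
        (hasFDerivAt_prodMk_left x b)
  obtain ⟨M, hM, hMderiv⟩ := exists_hasFDerivAt_gradient hpartial_a
    (HasFDerivAt.comp (g := precomp ℝ (inr ℝ E F)) x (precomp ℝ (inr ℝ E F)).hasFDerivAt
      (HasFDerivAt.comp (g := fderiv ℝ (uncurry S)) x hDderiv hinl))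
  obtain ⟨N, hN, hNderiv⟩ := exists_hasFDerivAt_gradient hpartial_x
    (HasFDerivAt.comp (g := precomp ℝ (inl ℝ E F)) a (precomp ℝ (inl ℝ E F)).hasFDerivAt
      (HasFDerivAt.comp (g := fderiv ℝ (uncurry S)) a hDderiv hinr))
  have hsymm (v w) : D v w = D w v := hS.isSymmSndFDerivAt (by simp) v w
  have hadj : N = M† := (eq_adjoint_iff N M).2 fun v u ↦ by
    rw [hN, real_inner_comm, hM]
    exact hsymm (0, v) (u, 0)
  exact ⟨M, hMderiv, hadj ▸ hNderiv⟩

theorem hasDerivWithinAt_gradient_of_gradient_flow {S : E → F → ℝ} {x : ℝ → E} {a g : F}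
    {I : Set ℝ} {t : ℝ} (hS : ContDiffAt ℝ 2 (uncurry S) (x t, a))
    (hx : HasDerivWithinAt x (∇ (fun y ↦ S y a) (x t)) I t)
    (hg : HasGradientAt (fun b ↦ ‖∇ (fun y ↦ S y b) (x t)‖ ^ 2 / 2) g a) :
    HasDerivWithinAt (fun s ↦ ∇ (S (x s)) a) g I t := by
  obtain ⟨M, hM, hMadj⟩ := exists_hasFDerivAt_gradient_adjoint hS
  have hg' : HasGradientAt (fun b ↦ ‖∇ (fun y ↦ S y b) (x t)‖ ^ 2 / 2)
      (M (∇ (fun y ↦ S y a) (x t))) a := by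
    rw [hasGradientAt_iff_hasFDerivAt]
    refine (hMadj.norm_sq.mul_const 2⁻¹).congr_fderiv ?_
    ext v
    simp only [smul_apply, ContinuousLinearMap.comp_apply, coe_innerSL_apply, adjoint_inner_right,
      toDual_apply_apply, nsmul_eq_mul, smul_eq_mul]
    ring
  rw [hg.unique hg']
  exact hM.comp_hasDerivWithinAt t hx

end Jacobi

lemma hasDerivAt_KF {s : ℝ} (hs : 1 < s) : HasDerivAt KF (√(1 - s⁻¹)) s := by
  have hs0 : 0 < s := by linarith
  have hs1 : 0 < s - 1 := by linarith
  have hsub : HasDerivAt (fun r : ℝ ↦ r - 1) 1 s := (hasDerivAt_id s).sub_const 1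
  have hsqrt : HasDerivAt (fun r ↦ √(r * (r - 1))) ((2 * s - 1) / (2 * (√s * √(s - 1)))) s := by
    refine (((hasDerivAt_id s).mul hsub).sqrt (mul_pos hs0 hs1).ne').congr_deriv ?_
    simp only [Pi.mul_apply, id, Real.sqrt_mul hs0.le]
    ring
  have hlog : HasDerivAt (fun r ↦ Real.log (√r + √(r - 1))) (1 / (2 * (√s * √(s - 1)))) s := by
    refine ((((hasDerivAt_id s).sqrt hs0.ne').add (hsub.sqrt hs1.ne')).log ?_).congr_deriv ?_
    · exact (add_pos (Real.sqrt_pos.2 hs0) (Real.sqrt_pos.2 hs1)).ne'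
    · simp only [Pi.add_apply, id]
      field_simp
      ring
  have hκ : √(1 - s⁻¹) = √(s - 1) / √s := by
    rw [← Real.sqrt_div hs1.le, sub_div, div_self hs0.ne', one_div]
  refine (hsqrt.sub hlog).congr_deriv ?_
  rw [hκ]
  field_simp
  rw [Real.sq_sqrt hs1.le]
  ring

lemma contDiffAt_KF {n : WithTop ℕ∞} {s : ℝ} (hs : 1 < s) : ContDiffAt ℝ n KF s := by
  have hs0 : 0 < s := by linarith
  have hs1 : 0 < s - 1 := by linarith
  have hsub : ContDiffAt ℝ n (fun r : ℝ ↦ r - 1) s := contDiffAt_id.sub contDiffAt_const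
  exact ((contDiffAt_id.mul hsub).sqrt (mul_pos hs0 hs1).ne').sub
    (((contDiffAt_id.sqrt hs0.ne').add (hsub.sqrt hs1.ne')).log
      (add_pos (Real.sqrt_pos.2 hs0) (Real.sqrt_pos.2 hs1)).ne')

section Coulomb

variable {E : Type*} [NormedAddCommGroup E] [InnerProductSpace ℝ E]

/-- The quantity `ρ(x, a)` of `rhoF` in an arbitrary real inner product space: the argument of `K`
in the generating functions `S_ι`. It is `0` when `q = 0`. -/
def coulombRho (q : ℝ) (x a : E) : ℝ := ‖a‖ / (2 * q) * (‖x‖ * ‖a‖ + ⟪x, a⟫)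

/-- The generating function `S_ι(x, a)` of `Sgen`, in an arbitrary real inner product space: a
complete integral of the Hamilton–Jacobi equation of `|p|² / 2 + q / (2 |x|)`. -/
def coulombAction (q ι : ℝ) (x a : E) : ℝ :=
  ι * (q / ‖a‖) * KF (coulombRho q x a) - (‖x‖ * ‖a‖ - ⟪x, a⟫) / 2

variable {q ι : ℝ} {x a : E}

lemma ne_zero_of_one_lt_coulombRho (hρ : 1 < coulombRho q x a) : q ≠ 0 ∧ x ≠ 0 ∧ a ≠ 0 := by
  refine ⟨?_, ?_, ?_⟩ <;> rintro rfl <;> norm_num [coulombRho] at hρ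

lemma hasFDerivAt_norm (hx : x ≠ 0) : HasFDerivAt (‖·‖) (‖x‖⁻¹ • innerSL ℝ x) x := by
  have hsqrt := (hasStrictFDerivAt_norm_sq x).hasFDerivAt.sqrt (by positivity)
  simp only [Real.sqrt_sq (norm_nonneg _)] at hsqrt
  refine hsqrt.congr_fderiv ?_
  ext v
  simp only [smul_apply, coe_innerSL_apply, nsmul_eq_mul, smul_eq_mul]
  field_simp
  norm_num

lemma contDiffAt_coulombRho {n : WithTop ℕ∞} (hx : x ≠ 0) (ha : a ≠ 0) :
    ContDiffAt ℝ n (uncurry (coulombRho q)) (x, a) := by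
  have hnx : ContDiffAt ℝ n (fun p : E × E ↦ ‖p.1‖) (x, a) := contDiffAt_fst.norm ℝ hx
  have hna : ContDiffAt ℝ n (fun p : E × E ↦ ‖p.2‖) (x, a) := contDiffAt_snd.norm ℝ ha
  exact (hna.div_const (2 * q)).mul ((hnx.mul hna).add (contDiffAt_fst.inner ℝ contDiffAt_snd))

lemma contDiffAt_coulombAction {n : WithTop ℕ∞} (hρ : 1 < coulombRho q x a) :
    ContDiffAt ℝ n (uncurry (coulombAction q ι)) (x, a) := by
  obtain ⟨-, hx, ha⟩ := ne_zero_of_one_lt_coulombRho hρ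
  have hnx : ContDiffAt ℝ n (fun p : E × E ↦ ‖p.1‖) (x, a) := contDiffAt_fst.norm ℝ hx
  have hna : ContDiffAt ℝ n (fun p : E × E ↦ ‖p.2‖) (x, a) := contDiffAt_snd.norm ℝ ha
  have hK : ContDiffAt ℝ n (fun p : E × E ↦ KF (coulombRho q p.1 p.2)) (x, a) :=
    (contDiffAt_KF hρ).comp (x, a) (contDiffAt_coulombRho hx ha)
  exact ((contDiffAt_const.mul (contDiffAt_const.div hna (norm_ne_zero_iff.2 ha))).mul hK).sub
    (((hnx.mul hna).sub (contDiffAt_fst.inner ℝ contDiffAt_snd)).div_const 2)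

variable [CompleteSpace E]

lemma hasGradientAt_coulombAction_left (hρ : 1 < coulombRho q x a) :
    HasGradientAt (fun y ↦ coulombAction q ι y a)
      (((ι * √(1 - (coulombRho q x a)⁻¹) - 1) / 2 * (‖a‖ / ‖x‖)) • x
        + ((ι * √(1 - (coulombRho q x a)⁻¹) + 1) / 2) • a) x := by
  obtain ⟨hq, hx, ha⟩ := ne_zero_of_one_lt_coulombRho hρ
  have hnx : ‖x‖ ≠ 0 := norm_ne_zero_iff.2 hx
  have hna : ‖a‖ ≠ 0 := norm_ne_zero_iff.2 ha
  have hnorm := (hasFDerivAt_norm hx).mul_const ‖a‖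
  have hinner : HasFDerivAt (fun y : E ↦ ⟪y, a⟫) (innerSL ℝ a) x := by
    simpa only [real_inner_comm, coe_innerSL_apply] using (innerSL ℝ a).hasFDerivAt (x := x)
  have hrho : HasFDerivAt (fun y ↦ coulombRho q y a) _ x :=
    (hnorm.add hinner).const_mul (‖a‖ / (2 * q))
  have hK := (hasDerivAt_KF hρ).comp_hasFDerivAt x hrho
  have hS : HasFDerivAt (fun y ↦ coulombAction q ι y a) _ x :=
    (hK.const_mul (ι * (q / ‖a‖))).sub ((hnorm.sub hinner).mul_const 2⁻¹)
  rw [hasGradientAt_iff_hasFDerivAt]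
  refine hS.congr_fderiv ?_
  ext v
  simp only [sub_apply, add_apply, smul_apply, coe_innerSL_apply, toDual_apply_apply, map_add,
    map_smul, smul_eq_mul]
  field_simp
  ring

theorem norm_sq_gradient_coulombAction (hι : ι ^ 2 = 1) (hρ : 1 < coulombRho q x a) :
    ‖∇ (fun y ↦ coulombAction q ι y a) x‖ ^ 2 = ‖a‖ ^ 2 - q / ‖x‖ := by
  obtain ⟨hq, hx, ha⟩ := ne_zero_of_one_lt_coulombRho hρ
  have hnx : ‖x‖ ≠ 0 := norm_ne_zero_iff.2 hx
  have hna : ‖a‖ ≠ 0 := norm_ne_zero_iff.2 ha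
  have hρ0 : coulombRho q x a ≠ 0 := by positivity
  have hκ : √(1 - (coulombRho q x a)⁻¹) ^ 2 = 1 - (coulombRho q x a)⁻¹ :=
    Real.sq_sqrt (sub_nonneg.2 (inv_le_one_of_one_le₀ hρ.le))
  have hnorm (k : ℝ) : ‖((k - 1) / 2 * (‖a‖ / ‖x‖)) • x + ((k + 1) / 2) • a‖ ^ 2
      = ‖a‖ ^ 2 + (k ^ 2 - 1) * (q * coulombRho q x a / ‖x‖) := by
    rw [norm_add_sq_real, norm_smul, norm_smul, mul_pow, mul_pow, Real.norm_eq_abs,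
      Real.norm_eq_abs, sq_abs, sq_abs, real_inner_smul_left, real_inner_smul_right, coulombRho]
    field_simp
    ring
  rw [(hasGradientAt_coulombAction_left hρ).gradient, hnorm, mul_pow, hι, hκ]
  field_simp
  ring

lemma hasGradientAt_half_norm_sq_gradient_coulombAction (hι : ι ^ 2 = 1)
    (hρ : 1 < coulombRho q x a) :
    HasGradientAt (fun b ↦ ‖∇ (fun y ↦ coulombAction q ι y b) x‖ ^ 2 / 2) a a := by
  obtain ⟨-, hx, ha⟩ := ne_zero_of_one_lt_coulombRho hρ
  have hcont : ContinuousAt (coulombRho q x) a :=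
    (contDiffAt_coulombRho (n := 0) hx ha).continuousAt.comp (f := fun b ↦ (x, b)) (by fun_prop)
  have hHJ : (fun b ↦ ‖∇ (fun y ↦ coulombAction q ι y b) x‖ ^ 2 / 2)
      =ᶠ[𝓝 a] fun b ↦ (‖b‖ ^ 2 - q / ‖x‖) / 2 :=
    (hcont.eventually (lt_mem_nhds hρ)).mono fun b hb ↦
      congrArg (· / 2) (norm_sq_gradient_coulombAction hι hb)
  refine HasGradientAt.congr_of_eventuallyEq ?_ hHJ
  rw [hasGradientAt_iff_hasFDerivAt]
  refine (((hasFDerivAt_id a).norm_sq.sub_const (q / ‖x‖)).mul_const 2⁻¹).congr_fderiv ?_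
  ext v
  simp only [id_eq, ContinuousLinearMap.comp_id, smul_apply, coe_innerSL_apply, toDual_apply_apply,
    nsmul_eq_mul, smul_eq_mul]
  ring

theorem generating_function_angle_linear_general (hι : ι = 1 ∨ ι = -1)
    {I : Set ℝ} {x : ℝ → E} {t : ℝ} (hρ : 1 < coulombRho q (x t) a)
    (hx : HasDerivWithinAt x (∇ (fun y ↦ coulombAction q ι y a) (x t)) I t) :
    HasDerivWithinAt (fun s ↦ ∇ (coulombAction q ι (x s)) a) a I t :=
  hasDerivWithinAt_gradient_of_gradient_flow (contDiffAt_coulombAction hρ) hx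
    (hasGradientAt_half_norm_sq_gradient_coulombAction (sq_eq_one_iff.2 hι) hρ)

end Coulomb

/-- If a `C¹` curve `x` in the region `{x ≠ 0, ρ(x,a) > 1}` solves the gradient flow
`x' = ∇ₓ S_ι(x,a)`, then the associated angle `Θ(t) := ∇ₐ S_ι(x(t),a)` evolves
linearly: `Θ'(t) = a`. -/
theorem generating_function_angle_linear (q : ℝ) (hq : 0 < q)
    (ι : ℝ) (hι : ι = 1 ∨ ι = -1) (a : R3) (ha : a ≠ 0)
    (I : Set ℝ) (hI : Convex ℝ I) (x : ℝ → R3)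
    (hx0 : ∀ t ∈ I, x t ≠ 0)
    (hρ : ∀ t ∈ I, 1 < rhoF q (x t) a)
    (hx : ∀ t ∈ I, HasDerivWithinAt x (gradient (fun y => Sgen q ι y a) (x t)) I t) :
    ∀ t ∈ I,
      HasDerivWithinAt (fun s => gradient (fun b => Sgen q ι (x s) b) a) a I t := by
  exact fun t ht ↦ generating_function_angle_linear_general hι (hρ t ht) (hx t ht)
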